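/- arXiv:0905.4441 — 5 statements merged into one kernel-verified Lean document; each statement's English description precedes it below -/
import Mathlib

section
/- Let d ≥ 1, let c, c₁, c₂ be points of Euclidean space ℝ^d and let r > 0, r₁ > 0, r₂ > 0 be real numbers. Assume that: the closed ball B(c₁,r₁) of radius r₁ centered at c₁ intersects the closed ball B(c,r); the closed ball B(c₂,r₂) intersects B(c,r); c₁ does not lie in the open ball of radius r₂ centered at c₂; dist(c,c₁) ≥ 2r; dist(c,c₂) ≥ 2r; and dist(c,c₁) ≤ dist(c,c₂). Then the projections of c₁ and c₂ onto the unit sphere centered at c are at distance at least 1/2, i.e. ‖(c₁ − c)/‖c₁ − c‖ − (c₂ − c)/‖c₂ − c‖‖ ≥ 1/2. -/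
open Metric Set

/-- Angular separation of the centers of two large balls meeting a small
ball: their projections onto the unit sphere centered at `c` are at distance at
least `1/2`. -/
theorem angular_separation (d : ℕ) (hd : 1 ≤ d)
    (c c₁ c₂ : EuclideanSpace ℝ (Fin d)) (r r₁ r₂ : ℝ)
    (hr : 0 < r) (hr₁ : 0 < r₁) (hr₂ : 0 < r₂)
    (h₁ : (closedBall c₁ r₁ ∩ closedBall c r).Nonempty)
    (h₂ : (closedBall c₂ r₂ ∩ closedBall c r).Nonempty)
    (hc₁ : c₁ ∉ ball c₂ r₂)
    (hd₁ : 2 * r ≤ dist c c₁)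
    (hd₂ : 2 * r ≤ dist c c₂)
    (hle : dist c c₁ ≤ dist c c₂) :
    1 / 2 ≤ ‖(‖c₁ - c‖)⁻¹ • (c₁ - c) - (‖c₂ - c‖)⁻¹ • (c₂ - c)‖ := by
  obtain ⟨p, hp2, hpc⟩ := h₂
  rw [mem_closedBall] at hp2 hpc
  rw [mem_ball, not_lt] at hc₁
  have e1 : dist c c₁ = ‖c₁ - c‖ := by rw [dist_comm, dist_eq_norm]
  have e2 : dist c c₂ = ‖c₂ - c‖ := by rw [dist_comm, dist_eq_norm]
  have t : dist c c₂ ≤ dist p c + dist p c₂ := dist_triangle_left c c₂ p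
  have e3 : dist c₁ c₂ = ‖(c₁ - c) - (c₂ - c)‖ := by
    rw [dist_eq_norm]; congr 1; abel
  rw [e1] at hd₁ hle
  rw [e2] at hd₂ hle t
  rw [e3] at hc₁
  generalize c₁ - c = x at *
  generalize c₂ - c = y at *
  have hx : 0 < ‖x‖ := by linarith
  have hy : 0 < ‖y‖ := by linarith
  have key : x - y = ‖x‖ • ((‖x‖)⁻¹ • x - (‖y‖)⁻¹ • y) + (‖x‖ - ‖y‖) • ((‖y‖)⁻¹ • y) := by
    rw [smul_sub, sub_smul, smul_inv_smul₀ hx.ne', smul_inv_smul₀ hy.ne']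
    abel
  have n1 : ‖(‖y‖)⁻¹ • y‖ = 1 := by
    rw [norm_smul, norm_inv, norm_norm, inv_mul_cancel₀ hy.ne']
  have h := norm_add_le (‖x‖ • ((‖x‖)⁻¹ • x - (‖y‖)⁻¹ • y)) ((‖x‖ - ‖y‖) • ((‖y‖)⁻¹ • y))
  rw [← key, norm_smul, norm_smul, n1, norm_norm, Real.norm_eq_abs,
    abs_of_nonpos (by linarith)] at h
  have : ‖x‖ * (1 / 2) ≤ ‖x‖ * ‖(‖x‖)⁻¹ • x - (‖y‖)⁻¹ • y‖ := by linarith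
  exact le_of_mul_le_mul_left this hx
end

section
/- Let d ≥ 1, let P be a finite set of at least 2 points in Euclidean space ℝ^d, and for each p ∈ P let r_p = min{dist(p,q) : q ∈ P, q ≠ p} and let b_p be the closed ball of radius r_p centered at p. Let c ∈ ℝ^d and r > 0. Then the number of points p ∈ P such that r_p ≥ r, the ball b_p intersects the closed ball B(c,r) of radius r centered at c, and dist(c,p) > 2r, is at most 5^d. -/
open Metric Set

lemma aux_far {E : Type*} [NormedAddCommGroup E] [NormedSpace ℝ E] (x y : E) (r : ℝ) (hr : 0 < r)
    (hx : 2 * r < ‖x‖) (hxy : ‖x‖ ≤ ‖y‖) (h : ‖y‖ - r ≤ ‖x - y‖) :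
    1 ≤ ‖(2 / ‖x‖) • x - (2 / ‖y‖) • y‖ := by
  have ha : 0 < ‖x‖ := by linarith
  have hb : 0 < ‖y‖ := by linarith
  have e : (2 / ‖x‖) • x - (2 / ‖y‖) • y = (2 / ‖x‖) • (x - (‖x‖ / ‖y‖) • y) := by
    rw [smul_sub, smul_smul]
    congr 2
    field_simp
  have h1 : ‖y - (‖x‖ / ‖y‖) • y‖ = ‖y‖ - ‖x‖ := by
    have : y - (‖x‖ / ‖y‖) • y = (1 - ‖x‖ / ‖y‖) • y := by rw [sub_smul, one_smul]
    rw [this, norm_smul, Real.norm_of_nonneg]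
    · field_simp
    · rw [sub_nonneg, div_le_one hb]; exact hxy
  have h2 : ‖x - y‖ ≤ ‖x - (‖x‖ / ‖y‖) • y‖ + ‖y - (‖x‖ / ‖y‖) • y‖ := by
    have := norm_sub_le (x - (‖x‖ / ‖y‖) • y) (y - (‖x‖ / ‖y‖) • y)
    simpa using this
  rw [e, norm_smul, Real.norm_of_nonneg (by positivity), div_mul_eq_mul_div, le_div_iff₀ ha]
  linarith

/-- The number of points `p ∈ P` whose nearest-neighbor distance is at
least `r`, whose empty ball meets the closed ball `B(c,r)`, and which lie at distance
more than `2r` from `c`, is at most `5^d`. -/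
theorem packing_centers_far (d : ℕ) (hd : 1 ≤ d)
    (P : Set (EuclideanSpace ℝ (Fin d))) (hPfin : P.Finite) (hP : 2 ≤ P.ncard)
    (rp : EuclideanSpace ℝ (Fin d) → ℝ)
    (hrp : ∀ p ∈ P, IsLeast ((dist p) '' (P \ {p})) (rp p))
    (c : EuclideanSpace ℝ (Fin d)) (r : ℝ) (hr : 0 < r) :
    {p ∈ P | r ≤ rp p ∧ (closedBall p (rp p) ∩ closedBall c r).Nonempty ∧
      2 * r < dist c p}.ncard ≤ 5 ^ d := by
  classical
  set S := {p ∈ P | r ≤ rp p ∧ (closedBall p (rp p) ∩ closedBall c r).Nonempty ∧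
      2 * r < dist c p} with hS
  have hfin : S.Finite := hPfin.subset (fun p hp => hp.1)
  let f : EuclideanSpace ℝ (Fin d) → EuclideanSpace ℝ (Fin d) :=
    fun p => (2 / ‖p - c‖) • (p - c)
  have hfar : ∀ p ∈ S, 2 * r < ‖p - c‖ := by
    intro p hp
    rw [← dist_eq_norm, dist_comm]
    exact hp.2.2.2
  have hdist : ∀ p ∈ S, ∀ q ∈ S, p ≠ q → ‖q - c‖ - r ≤ ‖(p - c) - (q - c)‖ := by
    intro p hp q hq hpq
    have h1 : rp q ≤ dist q p := (hrp q hq.1).2 ⟨p, ⟨hp.1, hpq⟩, rfl⟩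
    obtain ⟨z, hz1, hz2⟩ := hq.2.2.1
    rw [mem_closedBall] at hz1 hz2
    have h2 := dist_triangle_left q c z
    rw [sub_sub_sub_cancel_right, ← dist_eq_norm, ← dist_eq_norm, dist_comm p q]
    linarith
  have hsep : ∀ p ∈ S, ∀ q ∈ S, p ≠ q → 1 ≤ ‖f p - f q‖ := by
    intro p hp q hq hpq
    rcases le_total ‖p - c‖ ‖q - c‖ with h | h
    · exact aux_far _ _ r hr (hfar p hp) h (hdist p hp q hq hpq)
    · rw [norm_sub_rev]
      exact aux_far _ _ r hr (hfar q hq) h (hdist q hq p hp hpq.symm)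
  have hinj : Set.InjOn f S := by
    intro p hp q hq hpq
    by_contra hne
    have := hsep p hp q hq hne
    rw [hpq, sub_self, norm_zero] at this
    linarith
  have key := Besicovitch.card_le_of_separated (hfin.toFinset.image f) (by
    intro x hx
    obtain ⟨p, hp, rfl⟩ := Finset.mem_image.1 hx
    have h0 : 0 < ‖p - c‖ := by linarith [hfar p (hfin.mem_toFinset.1 hp)]
    simp only [f]
    rw [norm_smul, Real.norm_of_nonneg (by positivity), div_mul_cancel₀ _ h0.ne']) (by
    intro x hx y hy hxy
    obtain ⟨p, hp, rfl⟩ := Finset.mem_image.1 hx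
    obtain ⟨q, hq, rfl⟩ := Finset.mem_image.1 hy
    exact hsep p (hfin.mem_toFinset.1 hp) q (hfin.mem_toFinset.1 hq)
      (fun h => hxy (by rw [h])))
  rw [Finset.card_image_of_injOn (by simpa using hinj), finrank_euclideanSpace_fin] at key
  rwa [Set.ncard_eq_toFinset_card S hfin]
end

section
/- Let d ≥ 1, let P be a finite set of at least 2 points in Euclidean space ℝ^d, and for each p ∈ P let r_p = min{dist(p,q) : q ∈ P, q ≠ p} and let b_p be the closed ball of radius r_p centered at p. Let c ∈ ℝ^d and r > 0. Then the number of points p ∈ P such that r_p ≥ r and the empty ball b_p intersects the closed ball of radius r centered at c is at most 2 · 5^d. -/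
open Metric Set

noncomputable def pkF {E : Type*} [NormedAddCommGroup E] [NormedSpace ℝ E] (x : E) : E :=
  if ‖x‖ ≤ 2 then x else (2 / ‖x‖) • x

theorem pkF_norm {E : Type*} [NormedAddCommGroup E] [NormedSpace ℝ E] (x : E) :
    ‖pkF x‖ ≤ 2 := by
  unfold pkF
  split_ifs with h
  · exact h
  · have : 0 < ‖x‖ := by linarith
    rw [norm_smul, Real.norm_of_nonneg (by positivity), div_mul_cancel₀ _ this.ne']

theorem pk_scale {E : Type*} [NormedAddCommGroup E] [NormedSpace ℝ E] (x y : E) (b : ℝ)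
    (hb : 0 ≤ b) (hx : 0 < ‖x‖) (hbx : b ≤ ‖x‖) (h : ‖x‖ - 1 ≤ ‖x - y‖) :
    b - 1 ≤ ‖(b / ‖x‖) • x - y‖ := by
  have h1 : ‖x - (b / ‖x‖) • x‖ = ‖x‖ - b := by
    have : x - (b / ‖x‖) • x = (1 - b / ‖x‖) • x := by rw [sub_smul, one_smul]
    have h2 : b / ‖x‖ ≤ 1 := (div_le_one hx).2 hbx
    rw [this, norm_smul, Real.norm_of_nonneg (by linarith)]
    field_simp
  have h3 : ‖x - y‖ ≤ ‖x - (b / ‖x‖) • x‖ + ‖(b / ‖x‖) • x - y‖ :=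
    norm_sub_le_norm_sub_add_norm_sub _ _ _
  linarith

theorem pkF_sep {E : Type*} [NormedAddCommGroup E] [NormedSpace ℝ E] (x y : E)
    (hxy : ‖y‖ ≤ ‖x‖) (h1 : 1 ≤ ‖x - y‖) (h : ‖x‖ - 1 ≤ ‖x - y‖) :
    1 ≤ ‖pkF x - pkF y‖ := by
  unfold pkF
  by_cases hx : ‖x‖ ≤ 2
  · rw [if_pos hx, if_pos (hxy.trans hx)]
    exact h1
  · rw [if_neg hx]
    push Not at hx
    have hx0 : 0 < ‖x‖ := by linarith
    split_ifs with hy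
    · have := pk_scale x y 2 (by norm_num) hx0 hx.le h
      linarith
    · push Not at hy
      have hy0 : 0 < ‖y‖ := by linarith
      have := pk_scale x y ‖y‖ hy0.le hx0 hxy h
      have e : (2 / ‖x‖) • x - (2 / ‖y‖) • y = (2 / ‖y‖) • ((‖y‖ / ‖x‖) • x - y) := by
        rw [smul_sub, smul_smul]
        congr 2
        field_simp
      rw [e, norm_smul, Real.norm_of_nonneg (by positivity), div_mul_eq_mul_div, le_div_iff₀ hy0]
      linarith

theorem pkF_sep' {E : Type*} [NormedAddCommGroup E] [NormedSpace ℝ E] (x y : E)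
    (h1 : 1 ≤ ‖x - y‖) (h : ‖x‖ - 1 ≤ ‖x - y‖) (h' : ‖y‖ - 1 ≤ ‖x - y‖) :
    1 ≤ ‖pkF x - pkF y‖ := by
  rcases le_total ‖y‖ ‖x‖ with hh | hh
  · exact pkF_sep x y hh h1 h
  · rw [norm_sub_rev] at h1 h' ⊢
    exact pkF_sep y x hh h1 h'

/-- packing lemma, Lemma 4 of the paper: a closed ball of radius `r`
intersects at most `2 · 5^d` empty balls of radius at least `r`. -/
theorem packing_lemma (d : ℕ) (hd : 1 ≤ d)
    (P : Set (EuclideanSpace ℝ (Fin d))) (hPfin : P.Finite) (hP : 2 ≤ P.ncard)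
    (rp : EuclideanSpace ℝ (Fin d) → ℝ)
    (hrp : ∀ p ∈ P, IsLeast ((dist p) '' (P \ {p})) (rp p))
    (c : EuclideanSpace ℝ (Fin d)) (r : ℝ) (hr : 0 < r) :
    {p ∈ P | r ≤ rp p ∧
      (closedBall p (rp p) ∩ closedBall c r).Nonempty}.ncard ≤ 2 * 5 ^ d := by
  classical
  set S := {p ∈ P | r ≤ rp p ∧ (closedBall p (rp p) ∩ closedBall c r).Nonempty} with hS
  have hSfin : S.Finite := hPfin.subset (fun p hp => hp.1)
  set g : EuclideanSpace ℝ (Fin d) → EuclideanSpace ℝ (Fin d) := fun p => pkF (r⁻¹ • (p - c))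
    with hg
  have key : ∀ p ∈ S, ∀ q ∈ S, p ≠ q → 1 ≤ ‖g p - g q‖ := by
    intro p hp q hq hpq
    have hnorm : ∀ z ∈ S, ‖r⁻¹ • (z - c)‖ - 1 ≤ r⁻¹ * rp z := by
      rintro z ⟨_, _, w, hw1, hw2⟩
      rw [norm_smul, Real.norm_of_nonneg (by positivity), ← dist_eq_norm]
      rw [mem_closedBall] at hw1 hw2
      have : dist z c ≤ rp z + r := by
        have := dist_triangle_left z c w
        linarith
      have h2 := mul_le_mul_of_nonneg_left this (inv_nonneg.2 hr.le)
      rw [mul_add, inv_mul_cancel₀ hr.ne'] at h2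
      linarith
    have e : ‖r⁻¹ • (p - c) - r⁻¹ • (q - c)‖ = r⁻¹ * dist p q := by
      rw [← smul_sub, sub_sub_sub_cancel_right, norm_smul, Real.norm_of_nonneg (by positivity),
        dist_eq_norm]
    have hd1 : rp p ≤ dist p q := (hrp p hp.1).2 ⟨q, ⟨hq.1, fun h => hpq h.symm⟩, rfl⟩
    have hd2 : rp q ≤ dist p q := by
      rw [dist_comm]
      exact (hrp q hq.1).2 ⟨p, ⟨hp.1, fun h => hpq h⟩, rfl⟩
    have hri : 0 ≤ r⁻¹ := inv_nonneg.2 hr.le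
    apply pkF_sep' <;> rw [e]
    · have := mul_le_mul_of_nonneg_left (hp.2.1.trans hd1) hri
      rwa [inv_mul_cancel₀ hr.ne'] at this
    · exact (hnorm p hp).trans (mul_le_mul_of_nonneg_left hd1 hri)
    · exact (hnorm q hq).trans (mul_le_mul_of_nonneg_left hd2 hri)
  have hinj : Set.InjOn g S := by
    intro p hp q hq h
    by_contra hpq
    have := key p hp q hq hpq
    rw [h, sub_self, norm_zero] at this
    linarith
  have hcard := Besicovitch.card_le_of_separated (hSfin.toFinset.image g)
    (by
      intro z hz
      obtain ⟨p, _, rfl⟩ := Finset.mem_image.1 hz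
      exact pkF_norm _)
    (by
      intro z hz w hw hzw
      obtain ⟨p, hp, rfl⟩ := Finset.mem_image.1 hz
      obtain ⟨q, hq, rfl⟩ := Finset.mem_image.1 hw
      exact key p (hSfin.mem_toFinset.1 hp) q (hSfin.mem_toFinset.1 hq)
        (fun h => hzw (by rw [h])))
  rw [Finset.card_image_of_injOn (by simpa using hinj), finrank_euclideanSpace_fin,
    ← Set.ncard_eq_toFinset_card S hSfin] at hcard
  omega
end

section
/- Let d ≥ 1, let P be a finite set of at least 2 points in Euclidean space ℝ^d, and for each p ∈ P let r_p = min{dist(p,q) : q ∈ P, q ≠ p}. Then for every point q ∈ ℝ^d, the number of points p ∈ P with dist(p,q) ≤ r_p (i.e. the number of reverse nearest neighbors of q in P) is at most 2 · 5^d. -/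
open Metric Set

lemma unit_sep {E : Type*} [NormedAddCommGroup E] [InnerProductSpace ℝ E] (x y : E)
    (hxy : x ≠ y) (h1 : ‖x‖ ≤ ‖x - y‖) (h2 : ‖y‖ ≤ ‖x - y‖) :
    1 ≤ ‖(‖x‖⁻¹ • x) - (‖y‖⁻¹ • y)‖ := by
  by_cases hx : x = 0
  · subst hx
    have hy : ‖y‖ ≠ 0 := by simpa using hxy.symm
    simp [norm_smul, hy]
  by_cases hy : y = 0
  · subst hy
    have hx : ‖x‖ ≠ 0 := by simpa using hx
    simp [norm_smul, hx]
  have hx' : 0 < ‖x‖ := norm_pos_iff.mpr hx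
  have hy' : 0 < ‖y‖ := norm_pos_iff.mpr hy
  have e := norm_sub_sq_real x y
  have hi : 2 * inner ℝ x y ≤ ‖x‖ * ‖y‖ := by
    rcases le_total ‖x‖ ‖y‖ with h | h
    · nlinarith
    · nlinarith
  have e2 := norm_sub_sq_real (‖x‖⁻¹ • x) (‖y‖⁻¹ • y)
  rw [norm_smul, norm_smul, norm_inv, norm_inv, norm_norm, norm_norm,
    inv_mul_cancel₀ hx'.ne', inv_mul_cancel₀ hy'.ne', real_inner_smul_left,
    real_inner_smul_right] at e2
  have hk : 2 * (‖x‖⁻¹ * (‖y‖⁻¹ * inner ℝ x y)) ≤ 1 := by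
    have : 2 * (‖x‖⁻¹ * (‖y‖⁻¹ * inner ℝ x y)) = (2 * inner ℝ x y) / (‖x‖ * ‖y‖) := by
      field_simp
    rw [this, div_le_one (by positivity)]
    exact hi
  have := norm_nonneg ((‖x‖⁻¹ • x) - (‖y‖⁻¹ • y))
  nlinarith

/-- Any query point `q` has at most `2 · 5^d` reverse nearest neighbors
in a finite point set `P ⊆ ℝ^d` with at least two points. -/
theorem reverse_nearest_neighbors_card_le (d : ℕ) (hd : 1 ≤ d)
    (P : Set (EuclideanSpace ℝ (Fin d))) (hPfin : P.Finite) (hP : 2 ≤ P.ncard)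
    (rp : EuclideanSpace ℝ (Fin d) → ℝ)
    (hrp : ∀ p ∈ P, IsLeast ((dist p) '' (P \ {p})) (rp p))
    (q : EuclideanSpace ℝ (Fin d)) :
    {p ∈ P | dist p q ≤ rp p}.ncard ≤ 2 * 5 ^ d := by
  classical
  have hS : {p ∈ P | dist p q ≤ rp p}.Finite := hPfin.subset (fun p hp => hp.1)
  rw [Set.ncard_eq_toFinset_card _ hS]
  let f : EuclideanSpace ℝ (Fin d) → EuclideanSpace ℝ (Fin d) :=
    fun p => ‖p - q‖⁻¹ • (p - q)
  have hle : ∀ a ∈ hS.toFinset, ∀ b ∈ hS.toFinset, a ≠ b → ‖a - q‖ ≤ ‖a - b‖ := by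
    intro a ha b hb hab
    rw [Set.Finite.mem_toFinset] at ha hb
    have h := (hrp a ha.1).2 ⟨b, ⟨hb.1, fun h => hab h.symm⟩, rfl⟩
    rw [← dist_eq_norm, ← dist_eq_norm]
    exact ha.2.trans h
  have hsep : ∀ a ∈ hS.toFinset, ∀ b ∈ hS.toFinset, a ≠ b → 1 ≤ ‖f a - f b‖ := by
    intro a ha b hb hab
    apply unit_sep
    · simpa using hab
    · simpa using hle a ha b hb hab
    · rw [sub_sub_sub_cancel_right, norm_sub_rev a b]
      exact hle b hb a ha hab.symm
  have hinj : Set.InjOn f hS.toFinset := by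
    intro a ha b hb h
    by_contra hab
    have := hsep a ha b hb hab
    rw [h, sub_self, norm_zero] at this
    linarith
  have key := Besicovitch.card_le_of_separated (hS.toFinset.image f) (by
    intro c hc
    obtain ⟨a, -, rfl⟩ := Finset.mem_image.mp hc
    have : ‖f a‖ ≤ 1 := by
      simp only [f, norm_smul, norm_inv, norm_norm]
      exact inv_mul_le_one
    linarith) (by
    intro c hc e he hce
    obtain ⟨a, ha, rfl⟩ := Finset.mem_image.mp hc
    obtain ⟨b, hb, rfl⟩ := Finset.mem_image.mp he
    exact hsep a ha b hb (fun h => hce (by rw [h])))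
  rw [Finset.card_image_of_injOn hinj, finrank_euclideanSpace_fin] at key
  omega
end

section
/- Let d ≥ 1, let P be a finite set of at least 2 points in Euclidean space ℝ^d, and for each p ∈ P let r_p = min{dist(p,q) : q ∈ P, q ≠ p} and let b_p be the closed ball of radius r_p centered at p. Let C = ∏_{i=1}^d [a_i, a_i + s] be an axis-aligned cube of side length s > 0. Then the number of points p ∈ P such that r_p > s/4 and the empty ball b_p intersects C is at most 2 · 5^d · ⌈2√d⌉^d. -/
open Metric Set

lemma sep_card {ι E : Type*} [NormedAddCommGroup E] [InnerProductSpace ℝ E]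
    [FiniteDimensional ℝ E] (T : Finset ι) (f : ι → E)
    (h2 : ∀ p ∈ T, ‖f p‖ ≤ 2) (h : ∀ p ∈ T, ∀ q ∈ T, p ≠ q → 1 ≤ ‖f p - f q‖) :
    T.card ≤ 5 ^ Module.finrank ℝ E := by
  classical
  have hinj : Set.InjOn f (T : Set ι) := by
    intro p hp q hq hpq
    by_contra hne
    have := h p hp q hq hne
    rw [hpq, sub_self, norm_zero] at this
    linarith
  rw [← Finset.card_image_of_injOn hinj]
  apply Besicovitch.card_le_of_separated
  · intro c hc
    obtain ⟨p, hp, rfl⟩ := Finset.mem_image.1 hc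
    exact h2 p hp
  · intro c hc e he hne
    obtain ⟨p, hp, rfl⟩ := Finset.mem_image.1 hc
    obtain ⟨q, hq, rfl⟩ := Finset.mem_image.1 he
    exact h p hp q hq (fun h => hne (by rw [h]))

lemma proj_sep {E : Type*} [NormedAddCommGroup E] [InnerProductSpace ℝ E] (p q : E)
    (hq : 2 ≤ ‖q‖) (hqp : ‖q‖ ≤ ‖p‖) (h : ‖p‖ - 1 ≤ ‖p - q‖) :
    1 ≤ ‖(2 / ‖p‖) • p - (2 / ‖q‖) • q‖ := by
  have hx : 0 < ‖p‖ := by linarith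
  have hy : 0 < ‖q‖ := by linarith
  have h1 : (‖p‖ - 1) ^ 2 ≤ ‖p - q‖ ^ 2 := pow_le_pow_left₀ (by linarith) h 2
  rw [norm_sub_sq_real] at h1
  have h2 : (1:ℝ) ^ 2 ≤ ‖(2 / ‖p‖) • p - (2 / ‖q‖) • q‖ ^ 2 := by
    rw [norm_sub_sq_real, norm_smul, norm_smul, real_inner_smul_left, real_inner_smul_right]
    simp only [norm_div, norm_norm, Real.norm_ofNat]
    generalize inner ℝ p q = t at *
    generalize ‖p‖ = x at *
    generalize ‖q‖ = y at *
    have e : (2 / x * x) ^ 2 - 2 * (2 / x * (2 / y * t)) + (2 / y * y) ^ 2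
        = 8 - 8 * t / (x * y) := by
      field_simp
      ring
    rw [e]
    have : 8 * t / (x * y) ≤ 7 := by
      rw [div_le_iff₀ (by positivity)]
      nlinarith [mul_nonneg (sub_nonneg.2 hq) (sub_nonneg.2 hqp),
        mul_nonneg (sub_nonneg.2 hq) (sub_nonneg.2 hq)]
    linarith
  exact le_of_sq_le_sq h2 (norm_nonneg _)

lemma pack {ι E : Type*} [NormedAddCommGroup E] [InnerProductSpace ℝ E]
    [FiniteDimensional ℝ E] (T : Finset ι) (f : ι → E) (r : ι → ℝ)
    (h1 : ∀ p ∈ T, 1 ≤ r p) (h2 : ∀ p ∈ T, ‖f p‖ ≤ r p + 1)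
    (h : ∀ p ∈ T, ∀ q ∈ T, p ≠ q → r p ≤ ‖f p - f q‖) :
    T.card ≤ 2 * 5 ^ Module.finrank ℝ E := by
  classical
  rw [← Finset.card_filter_add_card_filter_not (s := T) (fun p => ‖f p‖ ≤ 2), two_mul]
  apply add_le_add
  · apply sep_card _ f
    · intro p hp
      exact (Finset.mem_filter.1 hp).2
    · intro p hp q hq hne
      have hp := (Finset.mem_filter.1 hp).1
      exact (h1 p hp).trans (h p hp q (Finset.mem_filter.1 hq).1 hne)
  · apply sep_card _ (fun p => (2 / ‖f p‖) • f p)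
    · intro p hp
      have := (Finset.mem_filter.1 hp).2
      push Not at this
      simp only [norm_smul, norm_div, norm_norm, Real.norm_ofNat]
      rw [div_mul_cancel₀]
      linarith
    · intro p hp q hq hne
      obtain ⟨hp, hp2⟩ := Finset.mem_filter.1 hp
      obtain ⟨hq, hq2⟩ := Finset.mem_filter.1 hq
      push Not at hp2 hq2
      rcases le_total ‖f q‖ ‖f p‖ with hl | hl
      · exact proj_sep _ _ hq2.le hl (by linarith [h2 p hp, h p hp q hq hne])
      · rw [norm_sub_rev]
        exact proj_sep _ _ hp2.le hl (by linarith [h2 q hq, h q hq p hp hne.symm])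

lemma cover1 (m : ℕ) (hm : 0 < m) (s : ℝ) (hs : 0 < s) (a x : ℝ) (hx : x ∈ Icc a (a + s)) :
    ∃ k : Fin m, |x - (a + (k + 1 / 2) * (s / m))| ≤ s / m / 2 := by
  have hm' : (0:ℝ) < m := by exact_mod_cast hm
  have hw : 0 < s / m := by positivity
  obtain ⟨hx1, hx2⟩ := hx
  have hmw : (m:ℝ) * (s / m) = s := by field_simp
  generalize s / m = w at *
  have hu : (x - a) = (x - a) / w * w := by field_simp
  have hu0 : 0 ≤ (x - a) / w := div_nonneg (by linarith) hw.le
  have hum : (x - a) / w ≤ m := by rw [div_le_iff₀ hw]; linarith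
  generalize (x - a) / w = u at *
  have hk : ∃ k : Fin m, (k:ℝ) ≤ u ∧ u ≤ k + 1 := by
    by_cases hlt : u < m
    · exact ⟨⟨⌊u⌋₊, (Nat.floor_lt hu0).2 hlt⟩, Nat.floor_le hu0, (Nat.lt_floor_add_one u).le⟩
    · refine ⟨⟨m - 1, by omega⟩, ?_, ?_⟩ <;> simp only [Nat.cast_pred hm] <;> linarith
  obtain ⟨k, hk1, hk2⟩ := hk
  refine ⟨k, ?_⟩
  rw [abs_le]
  constructor <;> nlinarith

/-- quantitative Lemma 2 of the paper: for an axis-aligned cube of side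
`s`, the number of points `p ∈ P` with nearest-neighbor distance `rp p > s/4` whose
empty ball meets the cube is at most `2 · 5^d · ⌈2√d⌉^d`. -/
theorem candidate_list_size (d : ℕ) (hd : 1 ≤ d)
    (P : Set (EuclideanSpace ℝ (Fin d))) (hPfin : P.Finite) (hP : 2 ≤ P.ncard)
    (rp : EuclideanSpace ℝ (Fin d) → ℝ)
    (hrp : ∀ p ∈ P, IsLeast ((dist p) '' (P \ {p})) (rp p))
    (s : ℝ) (hs : 0 < s) (a : EuclideanSpace ℝ (Fin d)) :
    {p ∈ P | s / 4 < rp p ∧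
        (closedBall p (rp p) ∩
          {x : EuclideanSpace ℝ (Fin d) | ∀ i, x i ∈ Icc (a i) (a i + s)}).Nonempty
      }.ncard ≤ 2 * 5 ^ d * ⌈2 * Real.sqrt d⌉₊ ^ d := by
  classical
  set S := {p ∈ P | s / 4 < rp p ∧
        (closedBall p (rp p) ∩
          {x : EuclideanSpace ℝ (Fin d) | ∀ i, x i ∈ Icc (a i) (a i + s)}).Nonempty
      } with hS
  have hSfin : S.Finite := hPfin.subset (fun p hp => hp.1)
  set m := ⌈2 * Real.sqrt d⌉₊ with hmdef
  have hd' : (0:ℝ) < d := by exact_mod_cast hd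
  have hsq : 0 < Real.sqrt d := Real.sqrt_pos.2 hd'
  have hm : 0 < m := Nat.ceil_pos.2 (by positivity)
  have hm' : (0:ℝ) < m := by exact_mod_cast hm
  have hmle : 2 * Real.sqrt d ≤ m := Nat.le_ceil _
  let ctr : (Fin d → Fin m) → EuclideanSpace ℝ (Fin d) :=
    fun k => WithLp.toLp 2 (fun i => a i + ((k i : ℕ) + 1 / 2) * (s / m))
  have hcov : ∀ p, ∃ k : Fin d → Fin m, p ∈ S → dist p (ctr k) ≤ rp p + s / 4 := by
    intro p
    by_cases hp : p ∈ S
    · obtain ⟨hpP, hlt, x, hx1, hx2⟩ := hp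
      choose k hk using fun i => cover1 m hm s hs (a i) (x i) (hx2 i)
      refine ⟨k, fun _ => ?_⟩
      have hxc : dist x (ctr k) ≤ s / 4 := by
        rw [EuclideanSpace.dist_eq]
        have : ∑ i, dist (x i) (ctr k i) ^ 2 ≤ ∑ i : Fin d, (s / m / 2) ^ 2 := by
          apply Finset.sum_le_sum
          intro i _
          apply pow_le_pow_left₀ dist_nonneg
          rw [Real.dist_eq]
          exact hk i
        refine (Real.sqrt_le_sqrt this).trans ?_
        rw [Finset.sum_const, Finset.card_univ, Fintype.card_fin, nsmul_eq_mul,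
          Real.sqrt_mul hd'.le, Real.sqrt_sq (by positivity)]
        have e : Real.sqrt d * (s / m / 2) = (2 * Real.sqrt d) * s / (4 * m) := by
          field_simp
          ring
        rw [e, div_le_div_iff₀ (by positivity) (by positivity)]
        nlinarith [mul_le_mul_of_nonneg_right hmle hs.le]
      rw [mem_closedBall, dist_comm] at hx1
      linarith [dist_triangle p x (ctr k)]
    · exact ⟨fun _ => ⟨0, hm⟩, fun h => absurd h hp⟩
  choose g hg using hcov
  rw [Set.ncard_eq_toFinset_card S hSfin]
  have key := Finset.card_le_mul_card_image_of_maps_to (s := hSfin.toFinset)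
    (t := (Finset.univ : Finset (Fin d → Fin m))) (f := g) (fun _ _ => Finset.mem_univ _)
    (2 * 5 ^ d) (by
      intro k _
      have hw : 0 < s / 4 := by positivity
      have := pack (hSfin.toFinset.filter (fun p => g p = k))
        (fun p => (s / 4)⁻¹ • (p - ctr k)) (fun p => (s / 4)⁻¹ * rp p) ?_ ?_ ?_
      · simpa using this
      · intro p hp
        obtain ⟨hp, hk⟩ := Finset.mem_filter.1 hp
        rw [Set.Finite.mem_toFinset] at hp
        rw [inv_mul_eq_div, le_div_iff₀ hw]
        linarith [hp.2.1]
      · intro p hp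
        obtain ⟨hp, hk⟩ := Finset.mem_filter.1 hp
        rw [Set.Finite.mem_toFinset] at hp
        have := hg p hp
        rw [hk, dist_eq_norm] at this
        rw [norm_smul, norm_inv, Real.norm_of_nonneg hw.le]
        calc (s / 4)⁻¹ * ‖p - ctr k‖ ≤ (s / 4)⁻¹ * (rp p + s / 4) := by gcongr
          _ = _ := by rw [mul_add, inv_mul_cancel₀ hw.ne']
      · intro p hp q hq hne
        have hp := (Finset.mem_filter.1 hp).1
        have hq := (Finset.mem_filter.1 hq).1
        rw [Set.Finite.mem_toFinset] at hp hq
        have := (hrp p hp.1).2 ⟨q, ⟨hq.1, fun h => hne h.symm⟩, rfl⟩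
        rw [dist_eq_norm] at this
        rw [← smul_sub, sub_sub_sub_cancel_right, norm_smul, norm_inv,
          Real.norm_of_nonneg hw.le]
        gcongr)
  simpa using key
end
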